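/- arXiv:2106.16200 — 3 statements merged into one kernel-verified Lean document; each statement's English description precedes it below -/
import Mathlib

section
/- Let d ≥ 1, let M be a symmetric positive definite d×d real matrix, let C > 0 be a real constant, and let U : ℝ^d → ℝ be continuously differentiable. Define the Gibbs density ρ : ℝ^d × ℝ^d → ℝ by ρ(r,θ) = exp(−U(θ) − (1/2)·rᵀM⁻¹r). Then ρ is annihilated by the Fokker–Planck (adjoint) operator of the Hamiltonian SDE with friction: for every (r,θ) ∈ ℝ^d × ℝ^d, ∑_{i=1}^d ∂/∂r_i [ ( (∇U(θ))_i + C·(M⁻¹r)_i ) · ρ(r,θ) ] − ∑_{i=1}^d ∂/∂θ_i [ (M⁻¹r)_i · ρ(r,θ) ] + C·∑_{i=1}^d ∂²/∂r_i² ρ(r,θ) = 0. -/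
/-!
Write `N = M⁻¹`, `v = N r` and `g = ∇U(θ)`. Since `N` is symmetric, the quadratic form `rᵀ N r` has
gradient `2 N r`, so `∂ρ/∂rᵢ = -vᵢ ρ` and `∂ρ/∂θᵢ = -gᵢ ρ`. The cancellation then already holds for
each coordinate separately: the three `i`-th terms are
`(C Nᵢᵢ - (gᵢ + C vᵢ) vᵢ) ρ`, `-vᵢ gᵢ ρ` and `(-Nᵢᵢ + vᵢ²) ρ`, and the first, minus the second,
plus `C` times the third, is zero.
-/

open Real
open scoped Matrix

lemma hasDerivAt_mulVec_update {d : ℕ} (N : Matrix (Fin d) (Fin d) ℝ) (r : Fin d → ℝ)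
    (i j : Fin d) (t : ℝ) :
    HasDerivAt (fun s : ℝ => (N *ᵥ Function.update r i s) j) (N j i) t := by
  have h : ∀ k ∈ Finset.univ, HasDerivAt (fun s : ℝ => N j k * Function.update r i s k)
      (N j k * (Pi.single i (1 : ℝ) : Fin d → ℝ) k) t := fun k _ =>
    ((hasDerivAt_pi.1 (hasDerivAt_update r i t)) k).const_mul (N j k)
  simpa [Matrix.mulVec, dotProduct, Pi.single_apply] using HasDerivAt.fun_sum h

/-- For symmetric `N`, the `i`-th partial derivative of `u ↦ uᵀ N u` is `2 (N u)ᵢ`. -/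
lemma hasDerivAt_quadForm_update {d : ℕ} (N : Matrix (Fin d) (Fin d) ℝ) (hN : N.IsSymm)
    (r : Fin d → ℝ) (i : Fin d) (t : ℝ) :
    HasDerivAt (fun s : ℝ => Function.update r i s ⬝ᵥ (N *ᵥ Function.update r i s))
      (2 * (N *ᵥ Function.update r i t) i) t := by
  have h := HasDerivAt.fun_sum (u := Finset.univ) fun k _ =>
    ((hasDerivAt_pi.1 (hasDerivAt_update r i t)) k).fun_mul (hasDerivAt_mulVec_update N r i k t)
  refine h.congr_deriv ?_
  have hsymm : ∑ k, Function.update r i t k * N k i = (N *ᵥ Function.update r i t) i := by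
    simp only [Matrix.mulVec, dotProduct]
    exact Finset.sum_congr rfl fun k _ => by rw [hN.apply i k, mul_comm]
  rw [Finset.sum_add_distrib, hsymm]
  simp [Pi.single_apply, two_mul]

/-- The Gibbs density `ρ(r,θ) = exp(−U(θ) − ½ rᵀ M⁻¹ r)` is annihilated by the
Fokker–Planck (adjoint) operator of the Hamiltonian SDE with friction. -/
theorem gibbs_density_annihilated_by_fokker_planck
    (d : ℕ) (hd : 1 ≤ d)
    (M : Matrix (Fin d) (Fin d) ℝ) (hMsymm : M.IsSymm) (hMpd : M.PosDef)
    (C : ℝ) (hC : 0 < C)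
    (U : (Fin d → ℝ) → ℝ) (hU : ContDiff ℝ 1 U)
    (ρ : (Fin d → ℝ) → (Fin d → ℝ) → ℝ)
    (hρ : ∀ r θ : Fin d → ℝ,
      ρ r θ = Real.exp (-U θ - (1 / 2) * (r ⬝ᵥ (M⁻¹ *ᵥ r)))) :
    ∀ r θ : Fin d → ℝ,
      (∑ i : Fin d,
          deriv (fun t : ℝ =>
            ((deriv (fun s : ℝ => U (Function.update θ i s)) (θ i))
                + C * ((M⁻¹ *ᵥ Function.update r i t) i))
              * ρ (Function.update r i t) θ) (r i))
        - (∑ i : Fin d,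
            deriv (fun t : ℝ =>
              ((M⁻¹ *ᵥ r) i) * ρ r (Function.update θ i t)) (θ i))
        + C * (∑ i : Fin d,
            deriv (fun t : ℝ =>
              deriv (fun s : ℝ => ρ (Function.update r i s) θ) t) (r i)) = 0 := by
  intro r θ
  have hN : (M⁻¹).IsSymm := by
    rw [Matrix.IsSymm, Matrix.transpose_nonsing_inv, hMsymm.eq]
  have hρr : ∀ (i : Fin d) (t : ℝ), HasDerivAt (fun s : ℝ => ρ (Function.update r i s) θ)
      (-((M⁻¹ *ᵥ Function.update r i t) i) * ρ (Function.update r i t) θ) t := by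
    intro i t
    simp only [hρ]
    refine (((hasDerivAt_quadForm_update M⁻¹ hN r i t).const_mul (1 / 2)).const_sub
      (-U θ)).exp.congr_deriv ?_
    ring
  have hUθ : ∀ i : Fin d, HasDerivAt (fun s : ℝ => U (Function.update θ i s))
      (deriv (fun s : ℝ => U (Function.update θ i s)) (θ i)) (θ i) := by
    intro i
    have hd : DifferentiableAt ℝ U (Function.update θ i (θ i)) :=
      (hU.differentiable one_ne_zero).differentiableAt
    exact (hd.comp (θ i) (hasDerivAt_update θ i (θ i)).differentiableAt).hasDerivAt
  have hρθ : ∀ i : Fin d, HasDerivAt (fun s : ℝ => ρ r (Function.update θ i s))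
      (-deriv (fun s : ℝ => U (Function.update θ i s)) (θ i) * ρ r θ) (θ i) := by
    intro i
    simp only [hρ]
    refine ((hUθ i).fun_neg.sub_const _).exp.congr_deriv ?_
    rw [Function.update_eq_self]
    ring
  rw [Finset.mul_sum, ← Finset.sum_sub_distrib, ← Finset.sum_add_distrib]
  refine Finset.sum_eq_zero fun i _ => ?_
  have hv := hasDerivAt_mulVec_update M⁻¹ r i i (r i)
  have h₁ := (((hv.const_mul C).const_add
    (deriv (fun s : ℝ => U (Function.update θ i s)) (θ i))).fun_mul (hρr i (r i))).deriv
  have h₂ := ((hρθ i).const_mul ((M⁻¹ *ᵥ r) i)).deriv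
  have h₃ := (hv.fun_neg.fun_mul (hρr i (r i))).deriv
  rw [h₁, h₂, funext fun t => (hρr i t).deriv, h₃]
  simp only [Function.update_eq_self]
  ring
end

section
/- Let d ≥ 1, let M be a symmetric positive definite d×d real matrix, let C, η ∈ ℝ, let w ∈ ℝ^d be a fixed vector, and let U : ℝ^d → ℝ be twice continuously differentiable. Define the (one-step, fixed-noise) leapfrog map F : ℝ^d × ℝ^d → ℝ^d × ℝ^d by: θ* = θ + (η/2)·M⁻¹r, r' = r − η·∇U(θ*) − η·C·M⁻¹r + w, θ' = θ* + (η/2)·M⁻¹r', and F(r,θ) = (r', θ'). Then F is differentiable, and at every point (r,θ) the determinant of the Fréchet derivative of F equals det(I − η·C·M⁻¹); in particular this Jacobian determinant does not depend on (r,θ), and in the frictionless limit C = 0 it equals 1. -/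
open Matrix

/-!
The map is a composition `S ∘ K ∘ S` of a drift `S (r, θ) = (r, θ + (η/2) M⁻¹ r)`, a kick with
friction `K (r, θ) = (r - η ∇U(θ) - η C M⁻¹ r + w, θ)`, and the same drift again. The derivatives of
`S` and `K` are block triangular in the splitting `(r, θ)`: the diagonal blocks of `S` are identities,
those of `K` are `1 - η C M⁻¹` and the identity, and the Hessian of `U` only enters an off-diagonal
block of `K`. Hence, by the chain rule, the Jacobian determinant of the composition is
`1 * det (1 - η C M⁻¹) * 1` at every point.
-/

/-- The determinant of an endomorphism of `ℝᵈ × ℝᵈ` given in block form. -/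
theorem det_prod_blocks {d : ℕ} (A B P Q : (Fin d → ℝ) →ₗ[ℝ] (Fin d → ℝ)) :
    LinearMap.det ((A.coprod B).prod (P.coprod Q)) =
      (Matrix.fromBlocks (LinearMap.toMatrix' A) (LinearMap.toMatrix' B)
        (LinearMap.toMatrix' P) (LinearMap.toMatrix' Q)).det := by
  rw [← LinearMap.det_toMatrix ((Pi.basisFun ℝ (Fin d)).prod (Pi.basisFun ℝ (Fin d)))]
  congr 1
  ext i j
  rcases i with i | i <;> rcases j with j | j <;>
    simp [LinearMap.toMatrix_apply, LinearMap.toMatrix'_apply]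

/-- The one-step (fixed-noise) stochastic leapfrog map is differentiable and its Jacobian
determinant is everywhere equal to `det(I − ηC M⁻¹)`: it is state-independent
(quasi-symplecticity), and equals `1` in the frictionless limit `C = 0`. -/
theorem leapfrog_jacobian_determinant
    (d : ℕ) (hd : 1 ≤ d)
    (M : Matrix (Fin d) (Fin d) ℝ) (hMsymm : M.IsSymm) (hMpd : M.PosDef)
    (C η : ℝ) (w : Fin d → ℝ)
    (U : (Fin d → ℝ) → ℝ) (hU : ContDiff ℝ 2 U)
    (F : (Fin d → ℝ) × (Fin d → ℝ) → (Fin d → ℝ) × (Fin d → ℝ))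
    (hF : ∀ r θ : Fin d → ℝ,
      F (r, θ) =
        (r - η • (fun i : Fin d =>
              fderiv ℝ U (θ + (η / 2) • (M⁻¹ *ᵥ r)) (Pi.single i 1))
            - (η * C) • (M⁻¹ *ᵥ r) + w,
          (θ + (η / 2) • (M⁻¹ *ᵥ r)) +
            (η / 2) • (M⁻¹ *ᵥ
              (r - η • (fun i : Fin d =>
                  fderiv ℝ U (θ + (η / 2) • (M⁻¹ *ᵥ r)) (Pi.single i 1))
                - (η * C) • (M⁻¹ *ᵥ r) + w)))) :
    Differentiable ℝ F ∧
      ∀ x : (Fin d → ℝ) × (Fin d → ℝ),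
        LinearMap.det (fderiv ℝ F x).toLinearMap =
          (1 - (η * C) • M⁻¹ : Matrix (Fin d) (Fin d) ℝ).det := by
  let L : (Fin d → ℝ) →L[ℝ] (Fin d → ℝ) := (Matrix.toLin' M⁻¹).toContinuousLinearMap
  have hL : ∀ r : (Fin d → ℝ), L r = M⁻¹ *ᵥ r := fun r => rfl
  -- `G` is the gradient of `U`, in coordinates.
  let G : (Fin d → ℝ) → (Fin d → ℝ) := fun θ i => fderiv ℝ U θ (Pi.single i 1)
  have hG : Differentiable ℝ G := by
    have h1 : Differentiable ℝ (fderiv ℝ U) :=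
      (hU.fderiv_right (m := 1) (by norm_num)).differentiable (by norm_num)
    exact differentiable_pi.2 fun i => h1.clm_apply (differentiable_const _)
  let I : (Fin d → ℝ) →L[ℝ] (Fin d → ℝ) := ContinuousLinearMap.id ℝ (Fin d → ℝ)
  let S : (Fin d → ℝ) × (Fin d → ℝ) →L[ℝ] (Fin d → ℝ) × (Fin d → ℝ) :=
    (I.coprod 0).prod (((η / 2) • L).coprod I)
  let A : (Fin d → ℝ) →L[ℝ] (Fin d → ℝ) := I - (η * C) • L
  let K : (Fin d → ℝ) × (Fin d → ℝ) → (Fin d → ℝ) × (Fin d → ℝ) :=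
    fun p => (A p.1 - η • G p.2 + w, p.2)
  have hK : ∀ p, HasFDerivAt K
      ((A.coprod (-(η • fderiv ℝ G p.2))).prod ((0 : (Fin d → ℝ) →L[ℝ] (Fin d → ℝ)).coprod I)) p := by
    intro p
    have h1 : HasFDerivAt (fun p : (Fin d → ℝ) × (Fin d → ℝ) => A p.1)
        (A.comp (.fst ℝ (Fin d → ℝ) (Fin d → ℝ))) p :=
      (A.comp (.fst ℝ (Fin d → ℝ) (Fin d → ℝ))).hasFDerivAt
    have h2 : HasFDerivAt (fun p : (Fin d → ℝ) × (Fin d → ℝ) => G p.2)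
        ((fderiv ℝ G p.2).comp (.snd ℝ (Fin d → ℝ) (Fin d → ℝ))) p :=
      (hG p.2).hasFDerivAt.comp p hasFDerivAt_snd
    have h3 : HasFDerivAt K _ p :=
      ((h1.sub (h2.const_smul η)).add_const w).prodMk hasFDerivAt_snd
    refine h3.congr_fderiv (ContinuousLinearMap.ext fun v => ?_)
    simp [I, sub_eq_add_neg]
  have hFc : F = S ∘ K ∘ S := by
    funext ⟨r, θ⟩
    have hr : r - η • G (θ + (η / 2) • (M⁻¹ *ᵥ r)) - (η * C) • (M⁻¹ *ᵥ r) =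
        r - (η * C) • (M⁻¹ *ᵥ r) - η • G (θ + (η / 2) • (M⁻¹ *ᵥ r)) := by abel
    rw [hF]
    change (r - η • G (θ + (η / 2) • (M⁻¹ *ᵥ r)) - (η * C) • (M⁻¹ *ᵥ r) + w, _ +
      (η / 2) • (M⁻¹ *ᵥ (r - η • G (θ + (η / 2) • (M⁻¹ *ᵥ r)) - (η * C) • (M⁻¹ *ᵥ r) + w))) = _
    rw [hr]
    simp [S, K, A, I, hL, add_comm]
  have hD : ∀ x, HasFDerivAt F (S.comp
      (((A.coprod (-(η • fderiv ℝ G (S x).2))).prod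
        ((0 : (Fin d → ℝ) →L[ℝ] (Fin d → ℝ)).coprod I)).comp S)) x := by
    intro x
    rw [hFc]
    exact S.hasFDerivAt.comp x ((hK (S x)).comp x S.hasFDerivAt)
  refine ⟨fun x => (hD x).differentiableAt, fun x => ?_⟩
  rw [(hD x).fderiv]
  have hS : LinearMap.det S.toLinearMap = 1 := by
    refine (det_prod_blocks (LinearMap.id) 0 ((η / 2) • L.toLinearMap) LinearMap.id).trans ?_
    simp
  have hA : LinearMap.toMatrix' A.toLinearMap = 1 - (η * C) • M⁻¹ := by
    change LinearMap.toMatrix' (LinearMap.id - (η * C) • Matrix.toLin' M⁻¹) = _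
    simp
  have hKd : LinearMap.det ((A.coprod (-(η • fderiv ℝ G (S x).2))).prod
      ((0 : (Fin d → ℝ) →L[ℝ] (Fin d → ℝ)).coprod I)).toLinearMap = (1 - (η * C) • M⁻¹).det := by
    refine (det_prod_blocks A.toLinearMap (-(η • fderiv ℝ G (S x).2)).toLinearMap
      0 LinearMap.id).trans ?_
    rw [hA]
    simp
  rw [ContinuousLinearMap.toLinearMap_comp, ContinuousLinearMap.toLinearMap_comp,
    LinearMap.det_comp, LinearMap.det_comp, hS, hKd]
  simp
end

section
/- Let v > 0 be a real number (a common variance), and let m₁, m₂ ∈ ℝ with m₁ ≠ m₂. Then for every m ∈ ℝ, the equal-weight mixture measure (1/2)·N(m₁, v) + (1/2)·N(m₂, v) on ℝ is not equal to the Gaussian measure N(m, v). Consequently, a Markov transition whose action on a candidate stationary Gaussian law produces such a proper two-component Gaussian mixture with distinct means cannot have that Gaussian law as its stationary distribution. -/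
/-! The moment generating function of `N(m, v)` is `t ↦ exp (m t + v t² / 2)`. If the mixture were
`N(m, v)`, the common variance factor would cancel and leave
`exp (m₁ t) + exp (m₂ t) = 2 exp (m t)` for every `t`. With `x = exp m₁`, `y = exp m₂`,
`z = exp m`, the values at `t = 1` and `t = -1` say that `z` is both the arithmetic and the
harmonic mean of `x` and `y`, which forces `x = y`, hence `m₁ = m₂`. -/

open MeasureTheory ProbabilityTheory
open scoped ENNReal

/-- The moment generating function identity after cancelling the factor `exp (v t² / 2)`. -/
lemma exp_add_exp_of_mixture_eq {v : NNReal} {m₁ m₂ m : ℝ}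
    (h : (1 / 2 : ℝ≥0∞) • gaussianReal m₁ v + (1 / 2 : ℝ≥0∞) • gaussianReal m₂ v
      = gaussianReal m v) (t : ℝ) :
    Real.exp (m₁ * t) + Real.exp (m₂ * t) = 2 * Real.exp (m * t) := by
  have hmgf (a : ℝ) : ∫ x, Real.exp (t * x) ∂gaussianReal a v
      = Real.exp (a * t) * Real.exp (v * t ^ 2 / 2) := by
    rw [← Real.exp_add]
    exact congrFun mgf_id_gaussianReal t
  have hint (a : ℝ) :
      Integrable (fun x ↦ Real.exp (t * x)) ((1 / 2 : ℝ≥0∞) • gaussianReal a v) :=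
    (integrable_exp_mul_gaussianReal t).smul_measure (by simp)
  have key := congrArg (fun μ : Measure ℝ ↦ ∫ x, Real.exp (t * x) ∂μ) h
  simp only [integral_add_measure (hint m₁) (hint m₂), integral_smul_measure, hmgf,
    smul_eq_mul] at key
  have h2 : (1 / 2 : ℝ≥0∞).toReal = 1 / 2 := by simp
  rw [h2] at key
  refine mul_right_cancel₀ (Real.exp_ne_zero (v * t ^ 2 / 2)) ?_
  linarith

/-- An equal-weight mixture of two Gaussians with common variance `v > 0` and distinct
means is never equal to a single Gaussian with variance `v`; hence a Markov transition
producing such a mixture from a candidate Gaussian stationary law cannot leave that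
Gaussian invariant. -/
theorem gaussian_mixture_ne_gaussian
    (v : NNReal) (hv : 0 < v) (m₁ m₂ : ℝ) (hm : m₁ ≠ m₂) :
    ∀ m : ℝ,
      (1 / 2 : ℝ≥0∞) • gaussianReal m₁ v + (1 / 2 : ℝ≥0∞) • gaussianReal m₂ v
        ≠ gaussianReal m v := by
  intro m h
  have h1 := exp_add_exp_of_mixture_eq h 1
  have h2 := exp_add_exp_of_mixture_eq h (-1)
  simp only [mul_one, mul_neg, Real.exp_neg] at h1 h2
  apply hm
  apply Real.exp_injective
  have hx := Real.exp_pos m₁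
  have hy := Real.exp_pos m₂
  have hz := Real.exp_pos m
  generalize Real.exp m₁ = x at *
  generalize Real.exp m₂ = y at *
  generalize Real.exp m = z at *
  have h3 : (x + y) * z = 2 * (x * y) := by
    field_simp at h2
    linarith
  have h4 : (x - y) ^ 2 = 0 := by
    linear_combination (x + y) * h1 + 2 * h3
  exact sub_eq_zero.mp (pow_eq_zero_iff two_ne_zero |>.mp h4)
end
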